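/- Let k ≥ 2 and n = 8kN + 1 for a positive integer N. Then there exists a set of mutually orthogonal cyclic 4k-cycle systems of K_n of cardinality at least N/(16k−2) − 1 = (n−1)/(8k(16k−2)) − 1. In particular, if n ≡ 1 (mod 8k), then μ(4k,n) ≥ μ'(4k,n) ≥ (n−1)/(8k(16k−2)) − 1. -/

import Mathlib

/-- The edge set of the closed walk through `f 0, f 1, …, f (ℓ-1), f 0`. -/
def cycleEdges {V : Type*} [DecidableEq V] (ℓ : ℕ) (f : Fin ℓ → V) : Finset (Sym2 V) :=
  Finset.univ.image (fun i : Fin ℓ => s(f i, f ⟨(i.val + 1) % ℓ, Nat.mod_lt _ i.pos⟩))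

/-- `E` is the edge set of an `ℓ`-cycle. -/
def IsCycle {V : Type*} [DecidableEq V] (ℓ : ℕ) (E : Finset (Sym2 V)) : Prop :=
  ∃ f : Fin ℓ → V, Function.Injective f ∧ E = cycleEdges ℓ f

/-- `F` is an `ℓ`-cycle system of the complete graph on `V`: a set of `ℓ`-cycles whose
edge sets partition the edge set of the complete graph. -/
def IsCycleSystem {V : Type*} [DecidableEq V] (ℓ : ℕ) (F : Set (Finset (Sym2 V))) : Prop :=
  (∀ E ∈ F, IsCycle ℓ E) ∧
  F.Pairwise (fun E E' => Disjoint E E') ∧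
  (∀ e : Sym2 V, ¬ e.IsDiag ↔ ∃ E ∈ F, e ∈ E)

/-- Two cycle systems are orthogonal when any two cycles, one from each,
share at most one edge. -/
def Orthog {V : Type*} [DecidableEq V] (F F' : Set (Finset (Sym2 V))) : Prop :=
  ∀ E ∈ F, ∀ E' ∈ F', (E ∩ E').card ≤ 1

/-- Translation of a cycle (given by its edge set) by `g ∈ ZMod n`. -/
def translateCycle {n : ℕ} (g : ZMod n) (E : Finset (Sym2 (ZMod n))) : Finset (Sym2 (ZMod n)) :=
  E.image (Sym2.map (· + g))

/-- A cycle system of the complete graph on `ZMod n` is cyclic if closed under translation. -/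
def IsCyclicSystem {n : ℕ} (F : Set (Finset (Sym2 (ZMod n)))) : Prop :=
  ∀ E ∈ F, ∀ g : ZMod n, translateCycle g E ∈ F

/-!
The differences `1, …, 4kN` of `ZMod (8kN + 1)` are cut into `2k` columns of `2N` consecutive
numbers, and each column into `N` pairs `{a, a + 1}` with `a` odd. A base cycle takes one pair from
every column: it zigzags with step lengths `a` and returns with step lengths `a + 1`. As `t` runs
through `ZMod N`, the `N` base cycles use every difference once, so their translates form a cycle
system. The `i`-th system rotates the column `c` by `i * columnShift k c`. If two cycles from the
systems `i` and `i'` share two edges, or if a base cycle of the system `i` repeats a vertex, then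
`x * y = 0` in `ZMod N`, where `x` is `i - i'` or `i` and `0 < |y| ≤ 3k`; this is impossible for
distinct positive indices `i` and `i'` with `i * 3k < N` and `i' * 3k < N`.
-/

section CycleEdges

variable {V W : Type*} [DecidableEq V] [DecidableEq W]

theorem image_map_cycleEdges (φ : V → W) {ℓ : ℕ} (f : Fin ℓ → V) :
    (cycleEdges ℓ f).image (Sym2.map φ) = cycleEdges ℓ (φ ∘ f) := by
  simp only [cycleEdges, Finset.image_image]
  rfl

theorem IsCycle.one_lt_card {ℓ : ℕ} {E : Finset (Sym2 V)} (hE : IsCycle ℓ E) (hℓ : 3 ≤ ℓ) :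
    1 < E.card := by
  obtain ⟨f, hf, rfl⟩ := hE
  refine Finset.one_lt_card.mpr
    ⟨_, Finset.mem_image_of_mem _ (Finset.mem_univ ⟨0, by omega⟩),
      _, Finset.mem_image_of_mem _ (Finset.mem_univ ⟨1, by omega⟩), fun h ↦ ?_⟩
  have h1 : 1 % ℓ = 1 := Nat.mod_eq_of_lt (by omega)
  have h2 : 2 % ℓ = 2 := Nat.mod_eq_of_lt (by omega)
  simp [hf.eq_iff, h1, h2] at h

theorem IsCycleSystem.not_orthog_self [Nontrivial V] {ℓ : ℕ} {F : Set (Finset (Sym2 V))}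
    (hF : IsCycleSystem ℓ F) (hℓ : 3 ≤ ℓ) : ¬ Orthog F F := by
  intro hself
  obtain ⟨x, y, hxy⟩ := exists_pair_ne V
  obtain ⟨E, hE, -⟩ := (hF.2.2 s(x, y)).mp hxy
  have hcard := hself E hE E hE
  rw [Finset.inter_self] at hcard
  exact ((hF.1 E hE).one_lt_card hℓ).not_ge hcard

end CycleEdges

theorem ncard_image_of_pairwise {α β : Type*} {r : β → β → Prop} {s : Set α} {f : α → β}
    (hirr : ∀ a ∈ s, ¬ r (f a) (f a)) (hr : s.Pairwise (r.onFun f)) :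
    (f '' s).ncard = s.ncard := by
  refine Set.InjOn.ncard_image fun a ha b hb hab ↦ ?_
  by_contra hne
  exact hirr a ha (by simpa only [Function.onFun, ← hab] using hr ha hb hne)

section IntMod

theorem intCast_zmod_inj_of_abs_sub_lt {n : ℕ} {x y : ℤ} (hlt : |y - x| < n) :
    (x : ZMod n) = y ↔ x = y := by
  refine ⟨fun h ↦ ?_, congrArg _⟩
  rw [ZMod.intCast_eq_intCast_iff_dvd_sub] at h
  exact (sub_eq_zero.mp (Int.eq_zero_of_abs_lt_dvd h hlt)).symm

theorem intCast_mul_intCast_zmod_ne_zero {N : ℕ} {K x y : ℤ} (hx : x ≠ 0) (hxK : |x| * K < N)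
    (hy : y ≠ 0) (hyK : |y| ≤ K) : (x : ZMod N) * y ≠ 0 := by
  have hlt : |x * y| < N :=
    (abs_mul x y).trans_lt ((mul_le_mul_of_nonneg_left hyK (abs_nonneg x)).trans_lt hxK)
  rw [← Int.cast_mul, Ne, ZMod.intCast_zmod_eq_zero_iff_dvd]
  exact fun hdvd ↦ mul_ne_zero hx hy (Int.eq_zero_of_abs_lt_dvd hdvd hlt)

end IntMod

section DiffEdge

/-- The edge `{u, u + d}` of the complete graph on an additive group, recorded by its lower end
`u` and its difference `d`. -/
def diffEdge {G : Type*} [Add G] (u d : G) : Sym2 G := s(u, u + d)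

variable {G : Type*} [AddCommGroup G]

theorem map_add_right_diffEdge (g u d : G) :
    Sym2.map (· + g) (diffEdge u d) = diffEdge (u + g) d := by
  simp only [diffEdge, Sym2.map_mk, add_right_comm]

theorem map_sub_left_diffEdge (g u d : G) :
    Sym2.map (g - ·) (diffEdge u d) = diffEdge (g - u - d) d := by
  simp only [diffEdge, Sym2.map_mk, sub_add_cancel, ← sub_sub, Sym2.eq_swap]

theorem map_intCast_diffEdge {R : Type*} [AddGroupWithOne R] (u d : ℤ) :
    Sym2.map (Int.cast : ℤ → R) (diffEdge u d) = diffEdge (u : R) (d : R) := by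
  simp only [diffEdge, Sym2.map_mk, Int.cast_add]

variable {H : ℕ}

theorem diffEdge_intCast_inj {u u' : ZMod (2 * H + 1)} {d d' : ℤ} (hd : d ∈ Set.Icc 1 (H : ℤ))
    (hd' : d' ∈ Set.Icc 1 (H : ℤ)) :
    diffEdge u (d : ZMod (2 * H + 1)) = diffEdge u' (d' : ZMod (2 * H + 1)) ↔
      u = u' ∧ d = d' := by
  obtain ⟨hd1, hdH⟩ := hd
  obtain ⟨hd1', hdH'⟩ := hd'
  refine ⟨fun h ↦ ?_, fun h ↦ by rw [h.1, h.2]⟩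
  rw [diffEdge, diffEdge, Sym2.eq_iff] at h
  obtain ⟨rfl, h⟩ | ⟨rfl, h⟩ := h
  · refine ⟨rfl, (intCast_zmod_inj_of_abs_sub_lt ?_).mp (add_left_cancel h)⟩
    rw [abs_lt]; push_cast; constructor <;> linarith
  · have hsum : ((d' + d : ℤ) : ZMod (2 * H + 1)) = (0 : ℤ) := by
      push_cast
      rwa [add_assoc, add_eq_left] at h
    rw [intCast_zmod_inj_of_abs_sub_lt (by rw [abs_lt]; push_cast; constructor <;> linarith)]
      at hsum
    linarith

theorem not_isDiag_iff_exists_diffEdge {e : Sym2 (ZMod (2 * H + 1))} :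
    ¬ e.IsDiag ↔ ∃ u, ∃ d ∈ Set.Icc 1 (H : ℤ), e = diffEdge u (d : ZMod (2 * H + 1)) := by
  constructor
  · induction e using Sym2.ind with | _ x y =>
    rw [Sym2.mk_isDiag_iff]
    intro hxy
    have hne : (y - x).valMinAbs ≠ 0 := by
      rw [Ne, ZMod.valMinAbs_eq_zero, sub_eq_zero]
      exact Ne.symm hxy
    have hle : (y - x).valMinAbs.natAbs ≤ H :=
      (ZMod.natAbs_valMinAbs_le _).trans_eq (by omega)
    have hcast := ZMod.coe_valMinAbs (y - x)
    rcases hne.lt_or_gt with hneg | hpos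
    · refine ⟨y, -(y - x).valMinAbs, ⟨by omega, by omega⟩, ?_⟩
      rw [diffEdge, Int.cast_neg, hcast, neg_sub, add_sub_cancel, Sym2.eq_swap]
    · refine ⟨x, (y - x).valMinAbs, ⟨by omega, by omega⟩, ?_⟩
      rw [diffEdge, hcast, add_sub_cancel]
  · rintro ⟨u, d, ⟨hd1, hdH⟩, rfl⟩
    have hd0 : ((d : ℤ) : ZMod (2 * H + 1)) ≠ (0 : ℤ) := by
      rw [Ne, intCast_zmod_inj_of_abs_sub_lt (by rw [abs_lt]; push_cast; constructor <;> linarith)]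
      linarith
    simpa [diffEdge] using hd0

end DiffEdge

section DifferenceFamily

variable {H ℓ : ℕ} {ι κ : Type*}

/-- The set of all translates of a family of base cycles, each given by its vertex sequence. -/
def translates {n : ℕ} (vertex : ι → Fin ℓ → ZMod n) : Set (Finset (Sym2 (ZMod n))) :=
  {E | ∃ t g, translateCycle g (cycleEdges ℓ (vertex t)) = E}

/-- A cyclic difference family of base `ℓ`-cycles over `ZMod (2 * H + 1)`: the edges of the base
cycle `t` are `{low t j, low t j + diff t j}`, and the differences of all base cycles together
run through `1, …, H` exactly once. -/
structure IsDifferenceFamily (vertex : ι → Fin ℓ → ZMod (2 * H + 1))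
    (low : ι → κ → ZMod (2 * H + 1)) (diff : ι → κ → ℤ) : Prop where
  vertex_injective : ∀ t, Function.Injective (vertex t)
  mem_cycleEdges_iff : ∀ t e, e ∈ cycleEdges ℓ (vertex t) ↔
    ∃ j, e = diffEdge (low t j) (diff t j : ZMod (2 * H + 1))
  bijOn_diff : Set.BijOn (fun p : ι × κ ↦ diff p.1 p.2) Set.univ (Set.Icc 1 (H : ℤ))

theorem translateCycle_translateCycle {n : ℕ} (g g' : ZMod n) (E : Finset (Sym2 (ZMod n))) :
    translateCycle g' (translateCycle g E) = translateCycle (g + g') E := by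
  simp only [translateCycle, Finset.image_image, ← Sym2.map_comp]
  congr 2
  funext x
  exact add_assoc x g g'

theorem isCyclicSystem_translates {n : ℕ} (vertex : ι → Fin ℓ → ZMod n) :
    IsCyclicSystem (translates vertex) := by
  rintro _ ⟨t, g, rfl⟩ g'
  exact ⟨t, g + g', (translateCycle_translateCycle g g' _).symm⟩

namespace IsDifferenceFamily

variable {vertex : ι → Fin ℓ → ZMod (2 * H + 1)} {low : ι → κ → ZMod (2 * H + 1)}
  {diff : ι → κ → ℤ}

theorem diff_mem_Icc (h : IsDifferenceFamily vertex low diff) (t : ι) (j : κ) :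
    diff t j ∈ Set.Icc 1 (H : ℤ) :=
  h.bijOn_diff.mapsTo (Set.mem_univ (t, j))

theorem mem_translateCycle_iff (h : IsDifferenceFamily vertex low diff) {t : ι}
    {g : ZMod (2 * H + 1)} {e : Sym2 (ZMod (2 * H + 1))} :
    e ∈ translateCycle g (cycleEdges ℓ (vertex t)) ↔
      ∃ j, e = diffEdge (low t j + g) (diff t j : ZMod (2 * H + 1)) := by
  simp only [translateCycle, Finset.mem_image, h.mem_cycleEdges_iff]
  constructor
  · rintro ⟨_, ⟨j, rfl⟩, rfl⟩
    exact ⟨j, map_add_right_diffEdge _ _ _⟩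
  · rintro ⟨j, rfl⟩
    exact ⟨_, ⟨j, rfl⟩, map_add_right_diffEdge _ _ _⟩

theorem isCycleSystem (h : IsDifferenceFamily vertex low diff) :
    IsCycleSystem ℓ (translates vertex) := by
  refine ⟨?_, ?_, fun e ↦ ⟨fun he ↦ ?_, ?_⟩⟩
  · rintro _ ⟨t, g, rfl⟩
    exact ⟨_, (add_left_injective g).comp (h.vertex_injective t), image_map_cycleEdges _ _⟩
  · rintro _ ⟨t, g, rfl⟩ _ ⟨t', g', rfl⟩ hne
    refine Finset.disjoint_left.mpr fun e he he' ↦ hne ?_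
    obtain ⟨j, rfl⟩ := h.mem_translateCycle_iff.mp he
    obtain ⟨j', heq⟩ := h.mem_translateCycle_iff.mp he'
    obtain ⟨hlow, hdiff⟩ :=
      (diffEdge_intCast_inj (h.diff_mem_Icc t j) (h.diff_mem_Icc t' j')).mp heq
    obtain ⟨rfl, rfl⟩ := Prod.ext_iff.mp
      (h.bijOn_diff.injOn (Set.mem_univ (t, j)) (Set.mem_univ (t', j')) hdiff)
    rw [add_left_cancel hlow]
  · obtain ⟨u, d, hd, rfl⟩ := not_isDiag_iff_exists_diffEdge.mp he
    obtain ⟨⟨t, j⟩, -, rfl⟩ := h.bijOn_diff.surjOn hd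
    exact ⟨_, ⟨t, u - low t j, rfl⟩, h.mem_translateCycle_iff.mpr ⟨j, by rw [add_sub_cancel]⟩⟩
  · rintro ⟨_, ⟨t, g, rfl⟩, he⟩
    obtain ⟨j, rfl⟩ := h.mem_translateCycle_iff.mp he
    exact not_isDiag_iff_exists_diffEdge.mpr ⟨_, _, h.diff_mem_Icc t j, rfl⟩

variable {ℓ' : ℕ} {ι' κ' : Type*} {vertex' : ι' → Fin ℓ' → ZMod (2 * H + 1)}
  {low' : ι' → κ' → ZMod (2 * H + 1)} {diff' : ι' → κ' → ℤ}

-- Two translates sharing two edges would place their base cycles' edges with these differences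
-- at the same relative position, and a relative position does not change under translation.
theorem orthog (h : IsDifferenceFamily vertex low diff)
    (h' : IsDifferenceFamily vertex' low' diff')
    (hpos : ∀ t t' j₁ j₂ j₁' j₂', diff t j₁ = diff' t' j₁' → diff t j₂ = diff' t' j₂' →
      low t j₁ - low t j₂ = low' t' j₁' - low' t' j₂' → j₁ = j₂) :
    Orthog (translates vertex) (translates vertex') := by
  rintro _ ⟨t, g, rfl⟩ _ ⟨t', g', rfl⟩
  have hshared : ∀ e ∈ translateCycle g (cycleEdges ℓ (vertex t)) ∩
      translateCycle g' (cycleEdges ℓ' (vertex' t')), ∃ j j',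
      e = diffEdge (low t j + g) (diff t j : ZMod (2 * H + 1)) ∧
      low t j + g = low' t' j' + g' ∧ diff t j = diff' t' j' := by
    intro e he
    obtain ⟨he, he'⟩ := Finset.mem_inter.mp he
    obtain ⟨j, rfl⟩ := h.mem_translateCycle_iff.mp he
    obtain ⟨j', heq⟩ := h'.mem_translateCycle_iff.mp he'
    exact ⟨j, j', rfl, (diffEdge_intCast_inj (h.diff_mem_Icc t j) (h'.diff_mem_Icc t' j')).mp heq⟩
  refine Finset.card_le_one.mpr fun e₁ he₁ e₂ he₂ ↦ ?_
  obtain ⟨j₁, j₁', rfl, hlow₁, hdiff₁⟩ := hshared e₁ he₁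
  obtain ⟨j₂, j₂', rfl, hlow₂, hdiff₂⟩ := hshared e₂ he₂
  rw [hpos t t' j₁ j₂ j₁' j₂' hdiff₁ hdiff₂ (by linear_combination hlow₁ - hlow₂)]

end IsDifferenceFamily

end DifferenceFamily

section AltSum

/-- The alternating sum `a 0 - a 1 + a 2 - ⋯` of the first `m` terms of `a`: the position reached
after `m` steps of a zigzag path with step lengths `a`. -/
def altSum {R : Type*} [CommRing R] (a : ℕ → R) (m : ℕ) : R :=
  ∑ j ∈ Finset.range m, (-1) ^ j * a j

section CommRing

variable {R : Type*} [CommRing R] (a : ℕ → R)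

theorem altSum_zero : altSum a 0 = 0 := Finset.sum_range_zero _

theorem altSum_one : altSum a 1 = a 0 := by simp [altSum]

theorem altSum_two_mul_add_one (m : ℕ) : altSum a (2 * m + 1) = altSum a (2 * m) + a (2 * m) := by
  simp [altSum, Finset.sum_range_succ, pow_mul]

theorem altSum_two_mul_add_two (m : ℕ) :
    altSum a (2 * (m + 1)) = altSum a (2 * m) + a (2 * m) - a (2 * m + 1) := by
  simp [altSum, mul_add, Finset.sum_range_succ, pow_succ, pow_mul, sub_eq_add_neg]

theorem altSum_add_const_two_mul (x : R) (m : ℕ) :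
    altSum (fun j ↦ a j + x) (2 * m) = altSum a (2 * m) := by
  induction m with
  | zero => simp only [mul_zero, altSum_zero]
  | succ m ih => rw [altSum_two_mul_add_two, altSum_two_mul_add_two, ih]; ring

theorem altSum_const_mul (x : R) (m : ℕ) : altSum (fun j ↦ x * a j) m = x * altSum a m := by
  simp only [altSum, Finset.mul_sum, mul_left_comm]

theorem intCast_altSum (b : ℕ → ℤ) (m : ℕ) :
    ((altSum b m : ℤ) : R) = altSum (fun j ↦ (b j : R)) m := by
  simp [altSum]

-- Each step from an even to an odd position goes up, each step from an odd to an even position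
-- goes down, so the lower end is the even one.
theorem mk_altSum_altSum_succ (c : ℕ) :
    s(altSum a c, altSum a (c + 1)) = diffEdge (altSum a (2 * ((c + 1) / 2))) (a c) := by
  rcases Nat.even_or_odd' c with ⟨m, rfl | rfl⟩
  · rw [show (2 * m + 1) / 2 = m by omega, altSum_two_mul_add_one, diffEdge]
  · rw [show 2 * m + 1 + 1 = 2 * (m + 1) by ring, Nat.mul_div_cancel_left _ two_pos,
      altSum_two_mul_add_two, altSum_two_mul_add_one, diffEdge, sub_add_cancel, Sym2.eq_swap]

end CommRing

section Order

variable {R : Type*} [CommRing R] [LinearOrder R] [IsStrictOrderedRing R] {a : ℕ → R}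

theorem strictMono_altSum_two_mul (ha : StrictAnti a) : StrictMono fun m ↦ altSum a (2 * m) := by
  refine strictMono_nat_of_lt_succ fun m ↦ ?_
  have hstep := ha (Nat.lt_succ_self (2 * m))
  rw [altSum_two_mul_add_two, add_sub_assoc]
  exact lt_add_of_pos_right _ (sub_pos.mpr hstep)

theorem strictAnti_altSum_two_mul_add_one (ha : StrictAnti a) :
    StrictAnti fun m ↦ altSum a (2 * m + 1) := by
  refine strictAnti_nat_of_succ_lt fun m ↦ ?_
  have hstep := ha (Nat.lt_succ_self (2 * m + 1))
  simp only [altSum_two_mul_add_one, altSum_two_mul_add_two]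
  rw [sub_add]
  exact sub_lt_self _ (sub_pos.mpr hstep)

theorem altSum_two_mul_nonneg (ha : StrictAnti a) (m : ℕ) : 0 ≤ altSum a (2 * m) := by
  simpa only [mul_zero, altSum_zero] using (strictMono_altSum_two_mul ha).monotone m.zero_le

theorem altSum_two_mul_add_one_le (ha : StrictAnti a) (m : ℕ) : altSum a (2 * m + 1) ≤ a 0 := by
  simpa only [mul_zero, zero_add, altSum_one] using
    (strictAnti_altSum_two_mul_add_one ha).antitone m.zero_le

variable {k : ℕ}

theorem altSum_two_mul_lt_altSum_two_mul_add_one (ha : StrictAnti a) (hpos : 0 < a (2 * k - 1))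
    {m l : ℕ} (hm : m ≤ k) (hl : l < k) : altSum a (2 * m) < altSum a (2 * l + 1) := by
  obtain ⟨r, rfl⟩ := Nat.exists_eq_add_of_lt (Nat.zero_lt_of_lt hl)
  rw [zero_add] at *
  calc altSum a (2 * m) ≤ altSum a (2 * (r + 1)) := (strictMono_altSum_two_mul ha).monotone hm
    _ = altSum a (2 * r + 1) - a (2 * (r + 1) - 1) := by
      rw [altSum_two_mul_add_two, altSum_two_mul_add_one]; rfl
    _ < altSum a (2 * r + 1) := sub_lt_self _ hpos
    _ ≤ altSum a (2 * l + 1) :=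
      (strictAnti_altSum_two_mul_add_one ha).antitone (Nat.lt_succ_iff.mp hl)

theorem injOn_altSum (ha : StrictAnti a) (hpos : 0 < a (2 * k - 1)) :
    Set.InjOn (altSum a) (Set.Iio (2 * k)) := by
  intro p hp q hq h
  rw [Set.mem_Iio] at hp hq
  rcases Nat.even_or_odd' p with ⟨m, rfl | rfl⟩ <;> rcases Nat.even_or_odd' q with ⟨l, rfl | rfl⟩
  · rw [(strictMono_altSum_two_mul ha).injective h]
  · exact absurd h
      (altSum_two_mul_lt_altSum_two_mul_add_one ha hpos (by omega) (by omega)).ne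
  · exact absurd h
      (altSum_two_mul_lt_altSum_two_mul_add_one ha hpos (by omega) (by omega)).ne'
  · rw [(strictAnti_altSum_two_mul_add_one ha).injective h]

theorem altSum_two_mul_lt (ha : StrictAnti a) (hpos : 0 < a (2 * k - 1)) {m : ℕ} (hm : m ≤ k)
    (hk : 0 < k) : altSum a (2 * m) < a 0 :=
  (altSum_two_mul_lt_altSum_two_mul_add_one ha hpos hm hk).trans_le
    (altSum_two_mul_add_one_le ha 0)

theorem altSum_mem_Icc (ha : StrictAnti a) (hpos : 0 < a (2 * k - 1)) {p : ℕ} (hp : p < 2 * k) :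
    altSum a p ∈ Set.Icc 0 (a 0) := by
  rcases Nat.even_or_odd' p with ⟨m, rfl | rfl⟩
  · exact ⟨altSum_two_mul_nonneg ha m, (altSum_two_mul_lt ha hpos (by omega) (by omega)).le⟩
  · refine ⟨?_, altSum_two_mul_add_one_le ha m⟩
    exact (altSum_two_mul_nonneg ha 0).trans
      (altSum_two_mul_lt_altSum_two_mul_add_one ha hpos (Nat.zero_le k) (by omega)).le

end Order

end AltSum

section Zigzag

/-- The vertices, as integers, of the closed zigzag walk of length `4 * k` that first follows
the steps `a 0, …, a (2 * k - 1)` and then, reflected, the steps `a 0 + 1, …, a (2 * k - 1) + 1`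
back to its start. -/
def zigzag (k : ℕ) (a : ℕ → ℤ) (p : ℕ) : ℤ :=
  if p < 2 * k then altSum a p
  else altSum a (2 * k) - altSum (fun j ↦ a j + 1) (p - 2 * k)

/-- The lower ends of the edges of `zigzag k a`: the label `(h, c)` refers to the step of length
`a c + h`. -/
def zigzagLow (k : ℕ) (a : ℕ → ℤ) (j : Fin 2 × Fin (2 * k)) : ℤ :=
  if j.1 = 0 then altSum a (2 * ((j.2 + 1) / 2))
  else altSum a (2 * k) - altSum a (2 * ((j.2 + 1) / 2)) - (a j.2 + 1)

variable {k : ℕ} {a : ℕ → ℤ}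

theorem zigzag_add (q : ℕ) :
    zigzag k a (2 * k + q) = altSum a (2 * k) - altSum (fun j ↦ a j + 1) q := by
  rw [zigzag, if_neg (by omega), Nat.add_sub_cancel_left]

theorem zigzag_of_le {p : ℕ} (hp : p ≤ 2 * k) : zigzag k a p = altSum a p := by
  rcases hp.lt_or_eq with hp | rfl
  · rw [zigzag, if_pos hp]
  · rw [← add_zero (2 * k), zigzag_add, altSum_zero, sub_zero, add_zero]

theorem zigzag_mod {p : ℕ} (hp : p ≤ 4 * k) : zigzag k a (p % (4 * k)) = zigzag k a p := by
  rcases hp.lt_or_eq with hp | rfl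
  · rw [Nat.mod_eq_of_lt hp]
  · rw [Nat.mod_self, zigzag_of_le (Nat.zero_le _), altSum_zero,
      show 4 * k = 2 * k + 2 * k by ring, zigzag_add, altSum_add_const_two_mul, sub_self]

theorem mk_zigzag_zigzag_succ_of_lt (c : Fin (2 * k)) :
    s(zigzag k a c, zigzag k a (c + 1)) = diffEdge (zigzagLow k a (0, c)) (a c) := by
  rw [zigzag_of_le c.is_lt.le, zigzag_of_le c.is_lt, mk_altSum_altSum_succ, zigzagLow, if_pos rfl]

theorem mk_zigzag_zigzag_succ_add (c : Fin (2 * k)) :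
    s(zigzag k a (2 * k + c), zigzag k a (2 * k + c + 1)) =
      diffEdge (zigzagLow k a (1, c)) (a c + 1) := by
  rw [add_assoc, zigzag_add, zigzag_add, ← Sym2.map_mk (altSum a (2 * k) - ·),
    mk_altSum_altSum_succ, map_sub_left_diffEdge, altSum_add_const_two_mul, zigzagLow,
    if_neg one_ne_zero]

theorem mem_cycleEdges_zigzag_iff {e : Sym2 ℤ} :
    e ∈ cycleEdges (4 * k) (fun p ↦ zigzag k a p) ↔
      ∃ j : Fin 2 × Fin (2 * k), e = diffEdge (zigzagLow k a j) (a j.2 + (j.1 : ℕ)) := by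
  have hedge (p : Fin (4 * k)) : s(zigzag k a p, zigzag k a ((p + 1) % (4 * k))) =
      s(zigzag k a p, zigzag k a (p + 1)) := by rw [zigzag_mod p.is_lt]
  simp only [cycleEdges, Finset.mem_image, Finset.mem_univ, true_and, hedge, Prod.exists,
    Fin.exists_fin_two, Fin.val_zero, Fin.val_one, Nat.cast_zero, Nat.cast_one, add_zero,
    ← mk_zigzag_zigzag_succ_of_lt, ← mk_zigzag_zigzag_succ_add]
  constructor
  · rintro ⟨⟨p, hp⟩, rfl⟩
    rcases lt_or_ge p (2 * k) with hlt | hge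
    · exact .inl ⟨⟨p, hlt⟩, rfl⟩
    · refine .inr ⟨⟨p - 2 * k, by omega⟩, ?_⟩
      simp only [Nat.add_sub_cancel' hge]
  · rintro (⟨⟨c, hc⟩, rfl⟩ | ⟨⟨c, hc⟩, rfl⟩)
    · exact ⟨⟨c, by omega⟩, rfl⟩
    · exact ⟨⟨2 * k + c, by omega⟩, rfl⟩

theorem altSum_ne_altSum_two_mul_sub (ha : StrictAnti a) (hpos : 0 < a (2 * k - 1))
    (hsum : ∀ p < k, ∀ q < k, altSum a (2 * p) + altSum a (2 * q) ≠ altSum a (2 * k)) {c c' : ℕ}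
    (hc : c < 2 * k) (hc' : c' < 2 * k) :
    altSum a c ≠ altSum a (2 * k) - altSum (fun j ↦ a j + 1) c' := by
  have ha1 : StrictAnti fun j ↦ a j + 1 := ha.add_const 1
  have hpos1 : 0 < a (2 * k - 1) + 1 := by omega
  intro h
  rcases Nat.even_or_odd' c with ⟨m, rfl | rfl⟩
  · rcases Nat.even_or_odd' c' with ⟨l, rfl | rfl⟩
    · rw [altSum_add_const_two_mul] at h
      exact hsum m (by omega) l (by omega) (eq_sub_iff_add_eq.mp h)
    · have hm := altSum_two_mul_nonneg ha m
      have hl := altSum_two_mul_lt_altSum_two_mul_add_one ha1 hpos1 le_rfl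
        (show l < k by omega)
      rw [altSum_add_const_two_mul] at hl
      linarith
  · have hm := altSum_two_mul_lt_altSum_two_mul_add_one ha hpos le_rfl (show m < k by omega)
    have hc' := (altSum_mem_Icc ha1 hpos1 hc').1
    linarith

theorem injOn_zigzag (ha : StrictAnti a) (hpos : 0 < a (2 * k - 1))
    (hsum : ∀ p < k, ∀ q < k, altSum a (2 * p) + altSum a (2 * q) ≠ altSum a (2 * k)) :
    Set.InjOn (zigzag k a) (Set.Iio (4 * k)) := by
  have ha1 : StrictAnti fun j ↦ a j + 1 := ha.add_const 1
  have hpos1 : 0 < a (2 * k - 1) + 1 := by omega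
  have hcross {c c'} := altSum_ne_altSum_two_mul_sub (c := c) (c' := c') ha hpos hsum
  intro p hp q hq h
  rw [Set.mem_Iio] at hp hq
  unfold zigzag at h
  split_ifs at h with hp2 hq2 hq2
  · exact injOn_altSum ha hpos hp2 hq2 h
  · exact absurd h (hcross hp2 (by omega))
  · exact absurd h.symm (hcross hq2 (by omega))
  · have := injOn_altSum ha1 hpos1 (show p - 2 * k < 2 * k by omega)
      (show q - 2 * k < 2 * k by omega) (sub_right_injective h)
    omega

theorem zigzag_mem_Icc (ha : StrictAnti a) (hpos : 0 < a (2 * k - 1)) {p : ℕ} (hp : p < 4 * k) :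
    zigzag k a p ∈ Set.Icc (-(a 0 + 1)) (a 0) := by
  have ha1 : StrictAnti fun j ↦ a j + 1 := ha.add_const 1
  unfold zigzag
  split_ifs with hp2
  · obtain ⟨h0, h1⟩ := altSum_mem_Icc ha hpos hp2
    constructor <;> linarith
  · obtain ⟨h0, h1⟩ := altSum_mem_Icc ha1 (by omega) (show p - 2 * k < 2 * k by omega)
    have hT0 := altSum_two_mul_nonneg ha k
    have hT := altSum_two_mul_lt ha hpos le_rfl (by omega)
    constructor <;> linarith

theorem injective_intCast_zigzag {H : ℕ} (ha : StrictAnti a) (hpos : 0 < a (2 * k - 1))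
    (hsum : ∀ p < k, ∀ q < k, altSum a (2 * p) + altSum a (2 * q) ≠ altSum a (2 * k))
    (hH : a 0 < H) :
    Function.Injective fun p : Fin (4 * k) ↦ (zigzag k a p : ZMod (2 * H + 1)) := by
  intro p q h
  obtain ⟨hp0, hp1⟩ := zigzag_mem_Icc ha hpos p.is_lt
  obtain ⟨hq0, hq1⟩ := zigzag_mem_Icc ha hpos q.is_lt
  refine Fin.ext (injOn_zigzag ha hpos hsum p.is_lt q.is_lt ?_)
  refine (intCast_zmod_inj_of_abs_sub_lt ?_).mp h
  rw [abs_lt]; push_cast; constructor <;> linarith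

theorem mem_cycleEdges_intCast_zigzag_iff {n : ℕ} {e : Sym2 (ZMod n)} :
    e ∈ cycleEdges (4 * k) (fun p ↦ (zigzag k a p : ZMod n)) ↔ ∃ j : Fin 2 × Fin (2 * k),
      e = diffEdge (zigzagLow k a j : ZMod n) ((a j.2 + (j.1 : ℕ) : ℤ) : ZMod n) := by
  have hmap := image_map_cycleEdges (Int.cast : ℤ → ZMod n) (fun p : Fin (4 * k) ↦ zigzag k a p)
  simp only [Function.comp_def] at hmap
  simp only [← hmap, Finset.mem_image, mem_cycleEdges_zigzag_iff, ← map_intCast_diffEdge]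
  grind

theorem zigzagLow_zero_sub_zigzagLow_one (c : Fin (2 * k)) :
    zigzagLow k a (0, c) - zigzagLow k a (1, c) =
      2 * altSum a (2 * ((c + 1) / 2)) - altSum a (2 * k) + (a c + 1) := by
  rw [zigzagLow, zigzagLow, if_pos rfl, if_neg one_ne_zero]
  ring

end Zigzag

section Slot

/-- The `y`-th number in the column `c`, where `0, …, 2 * k * N - 1` is cut into `2 * k` columns
of `N` consecutive numbers, the column `0` being the topmost. -/
def slot (k N c : ℕ) (y : ZMod N) : ℤ := N * (2 * k - 1 - c) + y.val

variable {k N : ℕ}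

theorem intCast_slot [NeZero N] (c : ℕ) (y : ZMod N) : (slot k N c y : ZMod N) = y := by
  simp [slot]

theorem slot_lt_slot [NeZero N] {c c' : ℕ} (hc : c < c') (y y' : ZMod N) :
    slot k N c' y' < slot k N c y := by
  have hy' : (y'.val : ℤ) < N := by exact_mod_cast y'.val_lt
  have hcN : (N : ℤ) * 1 ≤ N * (c' - c) :=
    mul_le_mul_of_nonneg_left (by omega) (Int.natCast_nonneg N)
  unfold slot
  linarith

theorem slot_inj [NeZero N] {c c' : ℕ} {y y' : ZMod N} :
    slot k N c y = slot k N c' y' ↔ c = c' ∧ y = y' := by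
  refine ⟨fun h ↦ ?_, fun h ↦ by rw [h.1, h.2]⟩
  rcases lt_trichotomy c c' with hc | rfl | hc
  · exact absurd h (slot_lt_slot hc y y').ne'
  · refine ⟨rfl, ?_⟩
    rw [← intCast_slot (k := k) c y, h, intCast_slot]
  · exact absurd h (slot_lt_slot hc y' y).ne

theorem slot_mem_Ico [NeZero N] {c : ℕ} (hc : c < 2 * k) (y : ZMod N) :
    slot k N c y ∈ Set.Ico 0 (2 * k * N : ℤ) := by
  have hy : (y.val : ℤ) < N := by exact_mod_cast y.val_lt
  have hN : (0 : ℤ) ≤ N := Int.natCast_nonneg N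
  have hlow : (0 : ℤ) ≤ N * (2 * k - 1 - c) := mul_nonneg hN (by omega)
  have hc0 : (0 : ℤ) ≤ N * c := mul_nonneg hN (Int.natCast_nonneg c)
  unfold slot
  constructor <;> linarith [Int.natCast_nonneg y.val]

theorem exists_slot_eq [NeZero N] {x : ℤ} (hx : x ∈ Set.Ico 0 (2 * k * N : ℤ)) :
    ∃ c : Fin (2 * k), ∃ y : ZMod N, slot k N c y = x := by
  have hN : (0 : ℤ) < N := by exact_mod_cast NeZero.pos N
  have hq0 : 0 ≤ x / N := Int.ediv_nonneg hx.1 hN.le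
  have hq : x / N < 2 * k := Int.ediv_lt_of_lt_mul hN hx.2
  refine ⟨⟨(2 * k - 1 - x / N).toNat, by omega⟩, x, ?_⟩
  rw [slot, ZMod.val_intCast, Int.toNat_of_nonneg (by omega), sub_sub_cancel,
    Int.mul_ediv_add_emod]

end Slot

section ColumnShift

/-- The speed with which column `c` is rotated from one cycle system to the next. With the
speed `-c` in all columns, zigzag cycles could repeat vertices; the value at `0` prevents this. -/
def columnShift (k c : ℕ) : ℤ := if c = 0 then k + 1 else -c

variable {k : ℕ}

theorem columnShift_injective : Function.Injective (columnShift k) := by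
  intro c c' h
  unfold columnShift at h
  split_ifs at h <;> omega

theorem abs_columnShift_sub_le {c c' : ℕ} (hc : c < 2 * k) (hc' : c' < 2 * k) :
    |columnShift k c - columnShift k c'| ≤ 3 * k := by
  unfold columnShift
  rw [abs_le]
  split_ifs <;> constructor <;> omega

theorem altSum_columnShift (m : ℕ) :
    altSum (columnShift k) (2 * m) = if m = 0 then 0 else (k + 1 + m : ℤ) := by
  induction m with
  | zero => rw [mul_zero, altSum_zero, if_pos rfl]
  | succ m ih =>
    rw [altSum_two_mul_add_two, ih]
    unfold columnShift
    grind

theorem altSum_columnShift_add_ne {p q : ℕ} (hk : 0 < k) (hpq : p = 0 → q ≠ k)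
    (hqp : q = 0 → p ≠ k) :
    altSum (columnShift k) (2 * p) + altSum (columnShift k) (2 * q) ≠
      altSum (columnShift k) (2 * k) := by
  simp only [altSum_columnShift]
  split_ifs <;> omega

theorem abs_altSum_columnShift_add_sub_le {p q : ℕ} (hp : p ≤ k) (hq : q ≤ k) :
    |altSum (columnShift k) (2 * p) + altSum (columnShift k) (2 * q) -
      altSum (columnShift k) (2 * k)| ≤ 3 * k := by
  simp only [altSum_columnShift]
  rw [abs_le]
  split_ifs <;> constructor <;> omega

end ColumnShift

section ZigzagSystem

/-- The step lengths of the base cycle `t` of the `i`-th cycle system: one odd number from each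
column, at a position that moves with `i` at the speed of the column. -/
def stepLength (k N : ℕ) (i : ℤ) (t : ZMod N) (c : ℕ) : ℤ :=
  2 * slot k N c (t + i * columnShift k c) + 1

/-- The `i`-th cycle system, with one base cycle for each `t : ZMod N`. -/
def zigzagSystem (k N : ℕ) (i : ℤ) : Set (Finset (Sym2 (ZMod (2 * (4 * k * N) + 1)))) :=
  translates fun (t : ZMod N) (p : Fin (4 * k)) ↦ (zigzag k (stepLength k N i t) p : ZMod _)

variable {k N : ℕ} {i i' : ℤ} {t t' : ZMod N}

theorem strictAnti_stepLength [NeZero N] : StrictAnti (stepLength k N i t) := by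
  intro c c' hc
  unfold stepLength
  linarith [slot_lt_slot (k := k) (N := N) hc (t + i * columnShift k c)
    (t + i * columnShift k c')]

theorem stepLength_add_mem_Icc [NeZero N] {c : ℕ} (hc : c < 2 * k) (h : Fin 2) :
    stepLength k N i t c + (h : ℕ) ∈ Set.Icc 1 ((4 * k * N : ℕ) : ℤ) := by
  obtain ⟨hlow, hup⟩ := slot_mem_Ico (N := N) hc (t + i * columnShift k c)
  unfold stepLength
  push_cast
  rw [show (4 * k * N : ℤ) = 2 * (2 * k * N) by ring]
  constructor <;> omega

theorem stepLength_pos [NeZero N] {c : ℕ} (hc : c < 2 * k) : 0 < stepLength k N i t c := by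
  have hone := (stepLength_add_mem_Icc (i := i) (t := t) hc 0).1
  rw [Fin.val_zero, Nat.cast_zero, add_zero] at hone
  exact zero_lt_one.trans_le hone

theorem stepLength_lt [NeZero N] {c : ℕ} (hc : c < 2 * k) :
    stepLength k N i t c < (4 * k * N : ℕ) := by
  simpa using (stepLength_add_mem_Icc (i := i) (t := t) hc 1).2

theorem stepLength_add_inj [NeZero N] {j j' : Fin 2 × Fin (2 * k)} :
    stepLength k N i t j.2 + (j.1 : ℕ) = stepLength k N i' t' j'.2 + (j'.1 : ℕ) ↔
      j = j' ∧ t + i * columnShift k j.2 = t' + i' * columnShift k j.2 := by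
  constructor
  · intro h
    unfold stepLength at h
    have hfst : j.1 = j'.1 := by omega
    obtain ⟨hsnd, hy⟩ := slot_inj.mp (show slot k N j.2 (t + i * columnShift k j.2) =
      slot k N j'.2 (t' + i' * columnShift k j'.2) by omega)
    exact ⟨Prod.ext hfst (Fin.ext hsnd), by rw [hy, hsnd]⟩
  · rintro ⟨rfl, hy⟩
    rw [stepLength, stepLength, hy]

theorem bijOn_stepLength_add [NeZero N] :
    Set.BijOn (fun p : ZMod N × (Fin 2 × Fin (2 * k)) ↦
      stepLength k N i p.1 p.2.2 + (p.2.1 : ℕ)) Set.univ (Set.Icc 1 ((4 * k * N : ℕ) : ℤ)) := by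
  refine ⟨fun p _ ↦ stepLength_add_mem_Icc p.2.2.is_lt p.2.1, fun p _ p' _ h ↦ ?_, ?_⟩
  · obtain ⟨hj, hy⟩ := stepLength_add_inj.mp h
    exact Prod.ext (add_right_cancel hy) hj
  · intro d hd
    have hhalf : (d - 1) / 2 ∈ Set.Ico 0 (2 * k * N : ℤ) := by
      obtain ⟨hd1, hdH⟩ := hd
      push_cast at hdH
      rw [show (4 * k * N : ℤ) = 2 * (2 * k * N) by ring] at hdH
      constructor <;> omega
    obtain ⟨c, y, hcy⟩ := exists_slot_eq hhalf
    refine ⟨(y - i * columnShift k c, ⟨((d - 1) % 2).toNat, by omega⟩, c), Set.mem_univ _, ?_⟩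
    simp only [stepLength, sub_add_cancel, hcy]
    omega

theorem altSum_stepLength (m : ℕ) : altSum (stepLength k N i t) (2 * m) =
    2 * altSum (fun c ↦ slot k N c (t + i * columnShift k c)) (2 * m) := by
  rw [← altSum_const_mul]
  exact altSum_add_const_two_mul _ 1 m

theorem intCast_altSum_slot [NeZero N] (m : ℕ) :
    ((altSum (fun c ↦ slot k N c (t + i * columnShift k c)) (2 * m) : ℤ) : ZMod N) =
      i * (altSum (columnShift k) (2 * m) : ℤ) := by
  simp only [intCast_altSum, intCast_slot, ← altSum_const_mul, add_comm t,
    altSum_add_const_two_mul]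

theorem intCast_mul_altSum_columnShift_ne {x : ℤ} (hx : x ≠ 0) (hxN : |x| * (3 * k) < N)
    (hk : 0 < k) {p q : ℕ} (hp : p ≤ k) (hq : q ≤ k) (hpq : p = 0 → q ≠ k)
    (hqp : q = 0 → p ≠ k) :
    (x : ZMod N) * ((altSum (columnShift k) (2 * p) : ℤ) + (altSum (columnShift k) (2 * q) : ℤ) -
      (altSum (columnShift k) (2 * k) : ℤ)) ≠ 0 := by
  exact_mod_cast intCast_mul_intCast_zmod_ne_zero hx hxN
    (sub_ne_zero.mpr (altSum_columnShift_add_ne hk hpq hqp))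
    (abs_altSum_columnShift_add_sub_le hp hq)

theorem altSum_stepLength_add_ne [NeZero N] (hi : i ≠ 0) (hiN : |i| * (3 * k) < N) {p q : ℕ}
    (hp : p < k) (hq : q < k) :
    altSum (stepLength k N i t) (2 * p) + altSum (stepLength k N i t) (2 * q) ≠
      altSum (stepLength k N i t) (2 * k) := by
  intro h
  simp only [altSum_stepLength, ← mul_add] at h
  have hcast := congrArg (Int.cast : ℤ → ZMod N) (mul_left_cancel₀ two_ne_zero h)
  simp only [Int.cast_add, intCast_altSum_slot] at hcast
  exact intCast_mul_altSum_columnShift_ne hi hiN (by omega) hp.le hq.le (fun _ ↦ hq.ne)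
    (fun _ ↦ hp.ne) (by linear_combination hcast)

theorem altSum_stepLength_sub_ne [NeZero N] (hi : i ≠ i') (hiN : |i - i'| * (3 * k) < N)
    (hk : 0 < k) {m : ℕ} (hm : m ≤ k) :
    2 * altSum (stepLength k N i t) (2 * m) - altSum (stepLength k N i t) (2 * k) ≠
      2 * altSum (stepLength k N i' t') (2 * m) - altSum (stepLength k N i' t') (2 * k) := by
  intro h
  simp only [altSum_stepLength, ← mul_sub] at h
  have hcast := congrArg (Int.cast : ℤ → ZMod N) (mul_left_cancel₀ two_ne_zero h)
  simp only [Int.cast_sub, Int.cast_mul, Int.cast_ofNat, intCast_altSum_slot] at hcast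
  refine intCast_mul_altSum_columnShift_ne (N := N) (sub_ne_zero.mpr hi) hiN hk hm hm
    (by omega) (by omega) ?_
  push_cast
  linear_combination hcast

theorem isDifferenceFamily_zigzag [NeZero N] (hk : 0 < k) (hi : i ≠ 0)
    (hiN : |i| * (3 * k) < N) :
    IsDifferenceFamily (H := 4 * k * N)
      (fun (t : ZMod N) (p : Fin (4 * k)) ↦ (zigzag k (stepLength k N i t) p : ZMod _))
      (fun t j ↦ (zigzagLow k (stepLength k N i t) j : ZMod _))
      (fun t j ↦ stepLength k N i t j.2 + (j.1 : ℕ)) where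
  vertex_injective _ := injective_intCast_zigzag strictAnti_stepLength
    (stepLength_pos (by omega)) (fun _ hp _ hq ↦ altSum_stepLength_add_ne hi hiN hp hq)
    (stepLength_lt (by omega))
  mem_cycleEdges_iff _ _ := mem_cycleEdges_intCast_zigzag_iff
  bijOn_diff := bijOn_stepLength_add

theorem abs_two_mul_altSum_stepLength_sub_lt [NeZero N] (hk : 0 < k) {m : ℕ} (hm : m ≤ k) :
    |2 * altSum (stepLength k N i t) (2 * m) - altSum (stepLength k N i t) (2 * k)| <
      (4 * k * N : ℕ) := by
  have ha : StrictAnti (stepLength k N i t) := strictAnti_stepLength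
  have hnonneg := altSum_two_mul_nonneg ha m
  have hle : altSum (stepLength k N i t) (2 * m) ≤ altSum (stepLength k N i t) (2 * k) :=
    (strictMono_altSum_two_mul ha).monotone hm
  have hlt := (altSum_two_mul_lt ha (stepLength_pos (by omega)) le_rfl hk).trans
    (stepLength_lt (by omega))
  rw [abs_lt]
  constructor <;> linarith

-- The two edges of a column `c` have the consecutive differences `a c` and `a c + 1`, so both are
-- shared only if their relative positions agree too.
theorem intCast_zigzagLow_sub_ne [NeZero N] (hi : i ≠ i') (hiN : |i - i'| * (3 * k) < N)
    {c : Fin (2 * k)} (hc : stepLength k N i t c = stepLength k N i' t' c) :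
    (zigzagLow k (stepLength k N i t) (0, c) - zigzagLow k (stepLength k N i t) (1, c) :
        ZMod (2 * (4 * k * N) + 1)) ≠
      zigzagLow k (stepLength k N i' t') (0, c) - zigzagLow k (stepLength k N i' t') (1, c) := by
  have hk : 0 < k := by have := c.is_lt; omega
  have hm : ((c : ℕ) + 1) / 2 ≤ k := by omega
  rw [← Int.cast_sub, ← Int.cast_sub, zigzagLow_zero_sub_zigzagLow_one,
    zigzagLow_zero_sub_zigzagLow_one, hc, Int.cast_add, Int.cast_add _ (_ + 1), Ne,
    add_left_inj, intCast_zmod_inj_of_abs_sub_lt]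
  · exact altSum_stepLength_sub_ne hi hiN (by omega) hm
  · have h := abs_lt.mp (abs_two_mul_altSum_stepLength_sub_lt (i := i) (t := t) hk hm)
    have h' := abs_lt.mp (abs_two_mul_altSum_stepLength_sub_lt (i := i') (t := t') hk hm)
    rw [abs_lt]
    push_cast at *
    constructor <;> linarith

theorem orthog_zigzagSystem [NeZero N] (hk : 0 < k) (hi0 : i ≠ 0) (hi0N : |i| * (3 * k) < N)
    (hi0' : i' ≠ 0) (hi0N' : |i'| * (3 * k) < N) (hi : i ≠ i') (hiN : |i - i'| * (3 * k) < N) :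
    Orthog (zigzagSystem k N i) (zigzagSystem k N i') := by
  refine (isDifferenceFamily_zigzag hk hi0 hi0N).orthog
    (isDifferenceFamily_zigzag hk hi0' hi0N') fun t t' j₁ j₂ j₁' j₂' h₁ h₂ hlow ↦ ?_
  obtain ⟨rfl, hy₁⟩ := stepLength_add_inj.mp h₁
  obtain ⟨rfl, hy₂⟩ := stepLength_add_inj.mp h₂
  obtain ⟨b₁, c₁⟩ := j₁
  obtain ⟨b₂, c₂⟩ := j₂
  obtain rfl : c₁ = c₂ := by
    by_contra hne
    refine intCast_mul_intCast_zmod_ne_zero (sub_ne_zero.mpr hi) hiN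
      (sub_ne_zero.mpr (columnShift_injective.ne (Fin.val_injective.ne hne)))
      (abs_columnShift_sub_le c₁.is_lt c₂.is_lt) ?_
    push_cast
    linear_combination hy₁ - hy₂
  have hne := intCast_zigzagLow_sub_ne hi hiN (add_right_cancel h₁)
  match b₁, b₂ with
  | 0, 0 | 1, 1 => rfl
  | 0, 1 => exact absurd hlow hne
  | 1, 0 => exact absurd (by linear_combination -hlow) hne

theorem isCycleSystem_zigzagSystem [NeZero N] (hk : 0 < k) (hi : i ≠ 0)
    (hiN : |i| * (3 * k) < N) : IsCycleSystem (4 * k) (zigzagSystem k N i) :=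
  (isDifferenceFamily_zigzag hk hi hiN).isCycleSystem

theorem isCyclicSystem_zigzagSystem : IsCyclicSystem (zigzagSystem k N i) :=
  isCyclicSystem_translates _

theorem not_orthog_zigzagSystem_self [NeZero N] (hk : 0 < k) (hi : i ≠ 0)
    (hiN : |i| * (3 * k) < N) : ¬ Orthog (zigzagSystem k N i) (zigzagSystem k N i) :=
  have hN : 0 < N := NeZero.pos N
  have : Fact (1 < 2 * (4 * k * N) + 1) := ⟨Nat.lt_add_of_pos_left (by positivity)⟩
  (isCycleSystem_zigzagSystem hk hi hiN).not_orthog_self (by omega)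

theorem exists_pairwise_orthog_ncard_eq [NeZero N] (hk : 0 < k) {M : ℤ} (hM : M * (3 * k) < N) :
    ∃ S : Set (Set (Finset (Sym2 (ZMod (2 * (4 * k * N) + 1))))),
      (∀ F ∈ S, IsCycleSystem (4 * k) F ∧ IsCyclicSystem F) ∧
      S.Pairwise Orthog ∧ S.ncard = (Set.Icc 1 M).ncard := by
  have hlt {x : ℤ} (hx : |x| ≤ M) : |x| * (3 * k) < N :=
    (mul_le_mul_of_nonneg_right hx (by positivity)).trans_lt hM
  have hne {i : ℤ} (hi : i ∈ Set.Icc 1 M) : i ≠ 0 := (zero_lt_one.trans_le hi.1).ne'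
  have habs {i : ℤ} (hi : i ∈ Set.Icc 1 M) : |i| * (3 * k) < N :=
    hlt (abs_le.mpr ⟨by linarith [hi.1, hi.2], hi.2⟩)
  have horthog : (Set.Icc 1 M).Pairwise (Orthog.onFun (zigzagSystem k N)) :=
    fun i hi i' hi' hii' ↦ orthog_zigzagSystem hk (hne hi) (habs hi) (hne hi') (habs hi') hii'
      (hlt (abs_le.mpr ⟨by linarith [hi.1, hi'.2], by linarith [hi.2, hi'.1]⟩))
  exact ⟨zigzagSystem k N '' Set.Icc 1 M, Set.forall_mem_image.mpr fun i hi ↦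
    ⟨isCycleSystem_zigzagSystem hk (hne hi) (habs hi), isCyclicSystem_zigzagSystem⟩, horthog.image,
    ncard_image_of_pairwise (fun i hi ↦ not_orthog_zigzagSystem_self hk (hne hi) (habs hi))
      horthog⟩

end ZigzagSystem

theorem div_sub_one_le_ncard_Icc {N K : ℤ} (hK : 0 < K) :
    (N : ℝ) / K - 1 ≤ (Set.Icc 1 ((N - 1) / K)).ncard := by
  have hlt : N - 1 < ((N - 1) / K + 1) * K := Int.lt_ediv_add_one_mul_self _ hK
  have hle : (N : ℝ) ≤ (((N - 1) / K : ℤ) + 1) * K := by exact_mod_cast Int.sub_one_lt_iff.mp hlt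
  have hcard : (N - 1) / K ≤ (Set.Icc 1 ((N - 1) / K)).ncard := by
    rw [← Finset.coe_Icc, Set.ncard_coe_finset, Int.card_Icc, add_sub_cancel_right]
    exact Int.self_le_toNat _
  rw [sub_le_iff_le_add]
  calc (N : ℝ) / K ≤ ((N - 1) / K : ℤ) + 1 := (div_le_iff₀ (by exact_mod_cast hK)).mpr hle
    _ ≤ _ := by gcongr; exact_mod_cast hcard

theorem stmt_8_general (k N n : ℕ) (hk : 0 < k) (hn : n = 8 * k * N + 1) :
    ∃ S : Set (Set (Finset (Sym2 (ZMod n)))),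
      (∀ F ∈ S, IsCycleSystem (4 * k) F ∧ IsCyclicSystem F) ∧
      S.Pairwise Orthog ∧
      ((n : ℝ) - 1) / (8 * (k : ℝ) * (3 * (k : ℝ))) - 1 ≤ S.ncard := by
  obtain rfl : n = 2 * (4 * k * N) + 1 := by rw [hn]; ring
  rcases N.eq_zero_or_pos with rfl | hN
  · exact ⟨∅, by simp⟩
  have : NeZero N := ⟨hN.ne'⟩
  obtain ⟨S, hS, horthog, hcard⟩ := exists_pairwise_orthog_ncard_eq (N := N) hk
    (Int.le_sub_one_iff.mp (Int.ediv_mul_le _ (by positivity : (3 * k : ℤ) ≠ 0)))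
  refine ⟨S, hS, horthog, ?_⟩
  rw [hcard]
  convert div_sub_one_le_ncard_Icc (N := N) (K := 3 * k) (by positivity) using 2
  push_cast
  field_simp
  ring

/-- Theorem: for `k ≥ 2` and `n = 8kN + 1`, there is a set of mutually orthogonal cyclic
`4k`-cycle systems of `K_n` of cardinality at least `N/(16k-2) - 1 = (n-1)/(8k(16k-2)) - 1`;
in particular `μ(4k,n) ≥ μ'(4k,n) ≥ (n-1)/(8k(16k-2)) - 1`. -/
theorem stmt_8 (k N n : ℕ) (hk : 2 ≤ k) (hN : 0 < N) (hn : n = 8 * k * N + 1) :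
    ∃ S : Set (Set (Finset (Sym2 (ZMod n)))),
      (∀ F ∈ S, IsCycleSystem (4 * k) F ∧ IsCyclicSystem F) ∧
      S.Pairwise Orthog ∧
      ((n : ℝ) - 1) / (8 * (k : ℝ) * (16 * (k : ℝ) - 2)) - 1 ≤ S.ncard := by
  obtain ⟨S, hS, horthog, hcard⟩ := stmt_8_general k N n (by omega) hn
  refine ⟨S, hS, horthog, le_trans ?_ hcard⟩
  have hk' : (2 : ℝ) ≤ k := by exact_mod_cast hk
  have hn' : (0 : ℝ) ≤ n - 1 := by rw [hn]; push_cast; rw [add_sub_cancel_right]; positivity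
  gcongr
  linarith
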